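/- Let A be a real symmetric m×m matrix of rank r ≥ 1, let Y > 0 and C₁, C₂ > 0. Suppose |A_{ij}| ≤ C₁·Y for all i, j, and that some r×r minor of A has absolute value at least C₂·Y^r. Then every nonzero eigenvalue λ of A satisfies C₂·(m·C₁)^{−(r−1)}·Y ≤ |λ| ≤ m·C₁·Y. -/

import Mathlib

open Matrix

/-!
A matrix entrywise bounded by `B` has all eigenvalues bounded by `m * B`, by Gershgorin. For the
lower bound, keep in the diagonalization `A = U D Uᴴ` only the `r` columns of `U` belonging to
nonzero eigenvalues. Every `r × r` minor of `A` is then the product of a minor of `U`, the nonzero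
eigenvalues and a minor of `Uᴴ`. Minors of a contraction have absolute value at most `1`, so an
`r × r` minor of `A` is at most the product of the nonzero eigenvalues, of which all but `λ` are
controlled by the upper bound.
-/

open Module.End (HasEigenvalue)

theorem norm_le_card_mul_of_hasEigenvalue {K n : Type*} [NormedField K] [Fintype n] [DecidableEq n]
    {A : Matrix n n K} {B : ℝ} (hB : ∀ i j, ‖A i j‖ ≤ B) {μ : K}
    (hμ : HasEigenvalue (toLin' A) μ) : ‖μ‖ ≤ Fintype.card n * B := by
  obtain ⟨k, hk⟩ := eigenvalue_mem_ball hμ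
  calc ‖μ‖ ≤ ‖A k k‖ + ∑ j ∈ Finset.univ.erase k, ‖A k j‖ := norm_le_of_mem_closedBall hk
    _ = ∑ j, ‖A k j‖ := Finset.add_sum_erase _ (fun j ↦ ‖A k j‖) (Finset.mem_univ k)
    _ ≤ Fintype.card n * B := by
        simpa using Finset.sum_le_card_nsmul Finset.univ (fun j ↦ ‖A k j‖) B fun j _ ↦ hB k j

theorem hasEigenvalue_toLin'_iff_exists_mulVec_eq {R n : Type*} [CommRing R] [Fintype n]
    [DecidableEq n] {A : Matrix n n R} {μ : R} :
    HasEigenvalue (toLin' A) μ ↔ ∃ v : n → R, v ≠ 0 ∧ A *ᵥ v = μ • v := by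
  simp [Module.End.hasEigenvalue_iff, Submodule.ne_bot_iff, and_comm]

theorem rank_ne_zero_of_hasEigenvalue {K n : Type*} [Field K] [Fintype n] [DecidableEq n]
    {A : Matrix n n K} {μ : K} (hμ : HasEigenvalue (toLin' A) μ) (hμ₀ : μ ≠ 0) : A.rank ≠ 0 := by
  obtain ⟨v, hv, hAv⟩ := hasEigenvalue_toLin'_iff_exists_mulVec_eq.mp hμ
  intro hrank
  have mulVecLin_eq_zero : A.mulVecLin = 0 :=
    LinearMap.range_eq_bot.mp (Submodule.finrank_eq_zero.mp hrank)
  refine smul_ne_zero hμ₀ hv ?_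
  rw [← hAv, ← mulVecLin_apply, mulVecLin_eq_zero, LinearMap.zero_apply]

theorem mul_diagonal_mul_eq_submatrix {R l m n ι : Type*} [NonUnitalSemiring R] [Fintype n]
    [DecidableEq n] [Fintype ι] [DecidableEq ι] (U : Matrix l n R) (d : n → R) (V : Matrix n m R)
    {e : ι → n} (he : Function.Injective e) (hd : ∀ k ∉ Set.range e, d k = 0) :
    U * diagonal d * V = U.submatrix id e * diagonal (d ∘ e) * V.submatrix e id := by
  ext i j
  rw [mul_apply, mul_apply]
  simp only [mul_diagonal, submatrix_apply, id_eq, Function.comp_apply]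
  exact (Fintype.sum_of_injective e he _ (fun k ↦ U i k * d k * V k j)
    (fun k hk ↦ by simp [hd k hk]) fun _ ↦ rfl).symm

section L2Operator

open scoped Matrix.Norms.L2Operator

variable {𝕜 m n ι : Type*} [RCLike 𝕜] [Fintype m] [Fintype n] [DecidableEq n] [Fintype ι]
  [DecidableEq ι]

theorem l2_opNorm_le_one_of_conjTranspose_mul_self_eq_one {U : Matrix m n 𝕜} (hU : Uᴴ * U = 1) :
    ‖U‖ ≤ 1 := by
  have norm_id_le_one : ‖(1 : Matrix n n 𝕜)‖ ≤ 1 := by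
    rw [← diagonal_one, l2_opNorm_diagonal]
    exact (pi_norm_const_le (1 : 𝕜)).trans norm_one.le
  rw [← abs_norm, abs_le_one_iff_mul_self_le_one, ← l2_opNorm_conjTranspose_mul_self, hU]
  exact norm_id_le_one

theorem l2_opNorm_submatrix_le {κ : Type*} [Fintype κ] (M : Matrix m n 𝕜) {f : κ → m} {g : ι → n}
    (hf : Function.Injective f) (hg : Function.Injective g) : ‖M.submatrix f g‖ ≤ ‖M‖ := by
  classical
  let F : Matrix m κ 𝕜 := (1 : Matrix m m 𝕜).submatrix id f
  let G : Matrix n ι 𝕜 := (1 : Matrix n n 𝕜).submatrix id g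
  have hF : ‖Fᴴ‖ ≤ 1 := by
    rw [l2_opNorm_conjTranspose]
    apply l2_opNorm_le_one_of_conjTranspose_mul_self_eq_one
    ext i j
    simp [F, mul_apply, one_apply, hf.eq_iff]
  have hG : ‖G‖ ≤ 1 := by
    apply l2_opNorm_le_one_of_conjTranspose_mul_self_eq_one
    ext i j
    simp [G, mul_apply, one_apply, hg.eq_iff]
  have hM : M.submatrix f g = Fᴴ * M * G := by
    ext i j
    simp [F, G, mul_apply, one_apply]
  calc ‖M.submatrix f g‖ ≤ ‖Fᴴ‖ * ‖M‖ * ‖G‖ := by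
        rw [hM]
        exact (l2_opNorm_mul _ _).trans (by gcongr; exact l2_opNorm_mul _ _)
    _ ≤ 1 * ‖M‖ * 1 := by gcongr
    _ = ‖M‖ := by ring

theorem norm_det_le_l2_opNorm_pow (W : Matrix ι ι 𝕜) : ‖W.det‖ ≤ ‖W‖ ^ Fintype.card ι := by
  have hW : (Wᴴ * W).IsHermitian := isHermitian_conjTranspose_mul_self W
  have eigenvalue_le (i : ι) : |hW.eigenvalues i| ≤ ‖W‖ ^ 2 := by
    have : Nonempty ι := ⟨i⟩
    have mem : (hW.eigenvalues i : 𝕜) ∈ spectrum 𝕜 (Wᴴ * W) := by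
      simp [hW.spectrum_eq_image_range]
    simpa [l2_opNorm_conjTranspose_mul_self, sq] using spectrum.norm_le_norm_of_mem mem
  refine le_of_sq_le_sq ?_ (by positivity)
  calc ‖W.det‖ ^ 2 = ‖(Wᴴ * W).det‖ := by
        simp [det_mul, det_conjTranspose, sq]
    _ = ∏ i, |hW.eigenvalues i| := by
        simp [hW.det_eq_prod_eigenvalues]
    _ ≤ ∏ _i : ι, ‖W‖ ^ 2 :=
        Finset.prod_le_prod (fun _ _ ↦ abs_nonneg _) fun i _ ↦ eigenvalue_le i
    _ = (‖W‖ ^ Fintype.card ι) ^ 2 := by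
        rw [Finset.prod_const, Finset.card_univ, pow_right_comm]

theorem norm_det_submatrix_le_l2_opNorm_pow (M : Matrix m n 𝕜) (f : ι → m) (g : ι → n) :
    ‖(M.submatrix f g).det‖ ≤ ‖M‖ ^ Fintype.card ι := by
  by_cases hf : Function.Injective f
  · by_cases hg : Function.Injective g
    · exact (norm_det_le_l2_opNorm_pow _).trans (by gcongr; exact l2_opNorm_submatrix_le M hf hg)
    · obtain ⟨i, j, hij, hne⟩ := Function.not_injective_iff.mp hg
      rw [det_zero_of_column_eq hne fun k ↦ by simp [hij], norm_zero]
      positivity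
  · obtain ⟨i, j, hij, hne⟩ := Function.not_injective_iff.mp hf
    rw [det_zero_of_row_eq hne (by ext k; simp [hij]), norm_zero]
    positivity

theorem norm_det_submatrix_mul_diagonal_mul_le {p : Type*} [Fintype p] [DecidableEq p]
    (U : Matrix m n 𝕜) (d : n → 𝕜) (V : Matrix n p 𝕜) {e : ι → n} (he : Function.Injective e)
    (hd : ∀ k ∉ Set.range e, d k = 0) (ρ : ι → m) (σ : ι → p) :
    ‖((U * diagonal d * V).submatrix ρ σ).det‖ ≤
      ‖U‖ ^ Fintype.card ι * (∏ i, ‖d (e i)‖) * ‖V‖ ^ Fintype.card ι := by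
  have factor : (U * diagonal d * V).submatrix ρ σ =
      U.submatrix ρ e * diagonal (d ∘ e) * V.submatrix e σ := by
    rw [mul_diagonal_mul_eq_submatrix U d V he hd]
    rfl
  calc ‖((U * diagonal d * V).submatrix ρ σ).det‖
      = ‖(U.submatrix ρ e).det‖ * (∏ i, ‖d (e i)‖) * ‖(V.submatrix e σ).det‖ := by
        simp [factor, det_mul]
    _ ≤ ‖U‖ ^ Fintype.card ι * (∏ i, ‖d (e i)‖) * ‖V‖ ^ Fintype.card ι := by
        gcongr <;> apply norm_det_submatrix_le_l2_opNorm_pow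

theorem norm_det_submatrix_le_prod_abs_eigenvalues {A : Matrix n n 𝕜} (hA : A.IsHermitian)
    (e : ι ≃ {k // hA.eigenvalues k ≠ 0}) (ρ σ : ι → n) :
    ‖(A.submatrix ρ σ).det‖ ≤ ∏ i, |hA.eigenvalues (e i)| := by
  have support (k : n) (hk : k ∉ Set.range fun i ↦ (e i : n)) : (hA.eigenvalues k : 𝕜) = 0 := by
    by_contra h
    exact hk ⟨e.symm ⟨k, by exact_mod_cast h⟩, by simp⟩
  let U : Matrix n n 𝕜 := hA.eigenvectorUnitary
  let D : Matrix n n 𝕜 := diagonal (RCLike.ofReal ∘ hA.eigenvalues)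
  have diagonalization : A = U * D * Uᴴ :=
    hA.spectral_theorem.trans (Unitary.conjStarAlgAut_apply _ _)
  have norm_U : ‖U‖ ≤ 1 := l2_opNorm_le_one_of_conjTranspose_mul_self_eq_one
    (mem_unitaryGroup_iff'.mp hA.eigenvectorUnitary.2)
  calc ‖(A.submatrix ρ σ).det‖ = ‖((U * D * Uᴴ).submatrix ρ σ).det‖ := by rw [← diagonalization]
    _ ≤ ‖U‖ ^ Fintype.card ι * (∏ i, ‖(hA.eigenvalues (e i) : 𝕜)‖) * ‖Uᴴ‖ ^ Fintype.card ι :=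
        norm_det_submatrix_mul_diagonal_mul_le U _ Uᴴ (Subtype.val_injective.comp e.injective)
          support ρ σ
    _ ≤ 1 * (∏ i, |hA.eigenvalues (e i)|) * 1 := by
        simp only [l2_opNorm_conjTranspose, RCLike.norm_ofReal]
        gcongr <;> exact pow_le_one₀ (norm_nonneg U) norm_U
    _ = ∏ i, |hA.eigenvalues (e i)| := by ring

end L2Operator

section Hermitian

variable {𝕜 n : Type*} [RCLike 𝕜] [Fintype n] [DecidableEq n] {A : Matrix n n 𝕜}

theorem hasEigenvalue_toLin'_iff_exists_eigenvalues_eq (hA : A.IsHermitian) {μ : 𝕜} :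
    HasEigenvalue (toLin' A) μ ↔ ∃ k, (hA.eigenvalues k : 𝕜) = μ := by
  simp [Module.End.hasEigenvalue_iff_mem_spectrum, spectrum_toLin', hA.spectrum_eq_image_range]

theorem norm_det_submatrix_le_norm_eigenvalue_mul_pow (hA : A.IsHermitian) {r : ℕ}
    (hrank : A.rank = r) {B : ℝ} (hB : ∀ i j, ‖A i j‖ ≤ B) (ρ σ : Fin r → n) {μ : 𝕜}
    (hμ : HasEigenvalue (toLin' A) μ) (hμ₀ : μ ≠ 0) :
    ‖(A.submatrix ρ σ).det‖ ≤ ‖μ‖ * (Fintype.card n * B) ^ (r - 1) := by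
  obtain ⟨k, rfl⟩ := (hasEigenvalue_toLin'_iff_exists_eigenvalues_eq hA).mp hμ
  let e := (Fintype.equivFinOfCardEq (hA.rank_eq_card_non_zero_eigs.symm.trans hrank)).symm
  let a := e.symm ⟨k, by exact_mod_cast hμ₀⟩
  have eigenvalue_le (j : n) : |hA.eigenvalues j| ≤ Fintype.card n * B := by
    simpa using norm_le_card_mul_of_hasEigenvalue hB
      ((hasEigenvalue_toLin'_iff_exists_eigenvalues_eq hA).mpr ⟨j, rfl⟩)
  calc ‖(A.submatrix ρ σ).det‖ ≤ ∏ i, |hA.eigenvalues (e i)| :=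
        norm_det_submatrix_le_prod_abs_eigenvalues hA e ρ σ
    _ = |hA.eigenvalues k| * ∏ i ∈ Finset.univ.erase a, |hA.eigenvalues (e i)| := by
        simp [← Finset.mul_prod_erase Finset.univ _ (Finset.mem_univ a), a]
    _ ≤ |hA.eigenvalues k| * ∏ _i ∈ Finset.univ.erase a, Fintype.card n * B := by
        gcongr
        exact eigenvalue_le _
    _ = ‖(hA.eigenvalues k : 𝕜)‖ * (Fintype.card n * B) ^ (r - 1) := by
        simp

theorem stmt15_general (hA : A.IsHermitian) {r : ℕ} (hrank : A.rank = r) {Y C₁ C₂ : ℝ}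
    (hY : 0 < Y) (hbound : ∀ i j, ‖A i j‖ ≤ C₁ * Y) {ρ σ : Fin r → n}
    (hminor : C₂ * Y ^ r ≤ ‖(A.submatrix ρ σ).det‖) {μ : 𝕜}
    (hμ : HasEigenvalue (toLin' A) μ) (hμ₀ : μ ≠ 0) :
    C₂ * (Fintype.card n * C₁)⁻¹ ^ (r - 1) * Y ≤ ‖μ‖ ∧ ‖μ‖ ≤ Fintype.card n * C₁ * Y := by
  have upper : ‖μ‖ ≤ Fintype.card n * C₁ * Y := by
    simpa only [mul_assoc] using norm_le_card_mul_of_hasEigenvalue hbound hμ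
  refine ⟨?_, upper⟩
  have pos : 0 < Fintype.card n * C₁ :=
    pos_of_mul_pos_left ((norm_pos_iff.mpr hμ₀).trans_le upper) hY.le
  have rank_ne_zero : r ≠ 0 := hrank ▸ rank_ne_zero_of_hasEigenvalue hμ hμ₀
  have minor_le : C₂ * Y ^ r ≤ ‖μ‖ * (Fintype.card n * C₁ * Y) ^ (r - 1) := by
    simpa only [mul_assoc] using
      hminor.trans (norm_det_submatrix_le_norm_eigenvalue_mul_pow hA hrank hbound ρ σ hμ hμ₀)
  calc C₂ * (Fintype.card n * C₁)⁻¹ ^ (r - 1) * Y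
      = C₂ * Y ^ r / (Fintype.card n * C₁ * Y) ^ (r - 1) := by
        rw [← mul_pow_sub_one rank_ne_zero Y, mul_pow, inv_pow]
        field_simp
    _ ≤ ‖μ‖ := (div_le_iff₀ (by positivity)).mpr minor_le

end Hermitian

/-- Eigenvalue bounds for a real symmetric matrix of rank `r ≥ 1`
whose entries are `O(Y)` and which has an `r × r` minor of size `≫ Y^r`. -/
theorem stmt15 (m r : ℕ) (hr : 1 ≤ r)
    (A : Matrix (Fin m) (Fin m) ℝ) (hA : A.IsSymm) (hrank : A.rank = r)
    (Y C₁ C₂ : ℝ) (hY : 0 < Y) (hC₁ : 0 < C₁) (hC₂ : 0 < C₂)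
    (hbound : ∀ i j, |A i j| ≤ C₁ * Y)
    (hminor : ∃ ρ σ : Fin r → Fin m, Function.Injective ρ ∧ Function.Injective σ ∧
      C₂ * Y ^ r ≤ |(A.submatrix ρ σ).det|)
    (lam : ℝ) (hlam : lam ≠ 0)
    (heig : ∃ v : Fin m → ℝ, v ≠ 0 ∧ A.mulVec v = lam • v) :
    C₂ * ((m : ℝ) * C₁)⁻¹ ^ (r - 1) * Y ≤ |lam| ∧ |lam| ≤ (m : ℝ) * C₁ * Y := by
  obtain ⟨ρ, σ, -, -, hdet⟩ := hminor
  simpa using stmt15_general (by simpa using hA) hrank hY hbound hdet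
    (hasEigenvalue_toLin'_iff_exists_mulVec_eq.mpr heig) hlam
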